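/- Let d ≥ 2, β > 0, and let p be the probability mass function on ℤ proportional to e^{−β|j|} (the SOS increment law). Let H be the almost-sure limit of the spherical averages H_r of the free height field with increment law p on the rooted Cayley tree of order d. Then for every A with 0 < A < (d+1)β there exists B = B(A) < ∞ such that P(|H| ≥ s) ≤ B e^{−As} for all real s ≥ 0. -/

import Mathlib

open MeasureTheory ProbabilityTheory Filter Finset Topology

noncomputable section

/-- A non-root vertex of the rooted Cayley tree of order `d`: the first step from the
root is one of `d+1` children, every further step one of `d` children. -/
abbrev Vertex (d : ℕ) : Type := Fin (d + 1) × List (Fin d)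

/-- depth of a non-root vertex -/
def vdepth {d : ℕ} (v : Vertex d) : ℕ := v.2.length + 1

/-- the sphere `W_r` of radius `r ≥ 1`: all vertices of depth `r` -/
def sphereW (d r : ℕ) : Finset (Vertex d) :=
  (Finset.univ : Finset (Fin (d + 1) × (Fin (r - 1) → Fin d))).image
    (fun x => (x.1, List.ofFn x.2))

/-- height at `v`: sum of the increments along the path from the root to `v`
(the prefixes of length `0,…,|v.2|` of the step list of `v` enumerate that path). -/
def heightAt {d : ℕ} {Ω : Type*} (Y : Vertex d → Ω → ℝ) (v : Vertex d) (ω : Ω) : ℝ :=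
  ∑ k ∈ Finset.range (v.2.length + 1), Y (v.1, v.2.take k) ω

/-- spherical average `H_r` of the heights at depth `r` -/
def sphAvg (d : ℕ) {Ω : Type*} (Y : Vertex d → Ω → ℝ) (r : ℕ) (ω : Ω) : ℝ :=
  (((d + 1) * d ^ (r - 1) : ℕ) : ℝ)⁻¹ * ∑ v ∈ sphereW d r, heightAt Y v ω

theorem Real.exp_le_one_add_add_sq_mul_exp_abs (x : ℝ) :
    Real.exp x ≤ 1 + x + x ^ 2 * Real.exp |x| := by
  have h := Complex.norm_exp_sub_sum_le_norm_mul_exp (x : ℂ) 2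
  have hcast : Complex.exp x - ∑ m ∈ range 2, (x : ℂ) ^ m / (m.factorial : ℂ)
      = ((Real.exp x - (1 + x) : ℝ) : ℂ) := by
    simp [Finset.sum_range_succ]
  rw [hcast, Complex.norm_real, Complex.norm_real, Real.norm_eq_abs, Real.norm_eq_abs,
    sq_abs] at h
  linarith [le_abs_self (Real.exp x - (1 + x))]

/-- A centred random variable with an exponential moment of order `a` has a Gaussian bound on its
moment generating function, uniformly on every smaller symmetric interval. -/
theorem exists_mgf_le_exp_mul_sq {Ω : Type*} [MeasurableSpace Ω] {μ : Measure Ω}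
    [IsProbabilityMeasure μ] {X : Ω → ℝ} (hX : Measurable X) {a b : ℝ} (hb : 0 ≤ b) (hba : b < a)
    (hint : Integrable (fun ω => Real.exp (a * |X ω|)) μ) (hmean : ∫ ω, X ω ∂μ = 0) :
    ∃ C : ℝ, 0 ≤ C ∧ ∀ t : ℝ, |t| ≤ b →
      Integrable (fun ω => Real.exp (t * X ω)) μ ∧ mgf X μ t ≤ Real.exp (C * t ^ 2) := by
  have hδ : 0 < a - b := sub_pos.2 hba
  have ha : 0 < a := hb.trans_lt hba
  have hsq : Integrable (fun ω => X ω ^ 2 * Real.exp (b * |X ω|)) μ := by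
    refine (hint.const_mul (2 / (a - b) ^ 2)).mono' (by fun_prop) (ae_of_all _ fun ω => ?_)
    rw [Real.norm_of_nonneg (by positivity)]
    have h := Real.pow_div_factorial_le_exp (x := (a - b) * |X ω|) (by positivity) 2
    have hsplit : Real.exp (a * |X ω|) = Real.exp ((a - b) * |X ω|) * Real.exp (b * |X ω|) := by
      rw [← Real.exp_add]; ring_nf
    rw [hsplit, ← mul_assoc]
    refine mul_le_mul_of_nonneg_right ?_ (Real.exp_pos _).le
    calc X ω ^ 2 = 2 / (a - b) ^ 2 * (((a - b) * |X ω|) ^ 2 / (Nat.factorial 2 : ℝ)) := by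
          rw [mul_pow, sq_abs]
          simp only [Nat.factorial_two, Nat.cast_ofNat]
          field_simp
      _ ≤ _ := mul_le_mul_of_nonneg_left h (by positivity)
  have hX1 : Integrable X μ := by
    refine (hint.const_mul a⁻¹).mono' hX.aestronglyMeasurable (ae_of_all _ fun ω => ?_)
    have h := Real.add_one_le_exp (a * |X ω|)
    rw [Real.norm_eq_abs, inv_mul_eq_div, le_div_iff₀ ha]
    linarith
  refine ⟨∫ ω, X ω ^ 2 * Real.exp (b * |X ω|) ∂μ, integral_nonneg fun ω => by positivity,
    fun t ht => ?_⟩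
  have hexp : Integrable (fun ω => Real.exp (t * X ω)) μ := by
    refine hint.mono' (by fun_prop) (ae_of_all _ fun ω => ?_)
    rw [Real.norm_of_nonneg (Real.exp_pos _).le]
    refine Real.exp_le_exp.2 ((le_abs_self _).trans ?_)
    rw [abs_mul]
    exact mul_le_mul_of_nonneg_right (ht.trans hba.le) (abs_nonneg _)
  refine ⟨hexp, ?_⟩
  have hbound : ∀ ω, Real.exp (t * X ω)
      ≤ 1 + t * X ω + t ^ 2 * (X ω ^ 2 * Real.exp (b * |X ω|)) := fun ω => by
    refine (Real.exp_le_one_add_add_sq_mul_exp_abs _).trans ?_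
    rw [mul_pow, mul_assoc, abs_mul]
    gcongr
  have hlin : Integrable (fun ω => 1 + t * X ω) μ := (integrable_const 1).add (hX1.const_mul t)
  calc mgf X μ t
      ≤ ∫ ω, (1 + t * X ω + t ^ 2 * (X ω ^ 2 * Real.exp (b * |X ω|))) ∂μ :=
        integral_mono hexp (hlin.add (hsq.const_mul _)) hbound
    _ = (∫ ω, X ω ^ 2 * Real.exp (b * |X ω|) ∂μ) * t ^ 2 + 1 := by
        rw [integral_add hlin (hsq.const_mul _),
          integral_add (integrable_const 1) (hX1.const_mul t), integral_const_mul,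
          integral_const_mul, hmean]
        simp
        ring
    _ ≤ _ := Real.add_one_le_exp _

theorem summable_exp_neg_mul_abs_int {c : ℝ} (hc : 0 < c) :
    Summable fun j : ℤ => Real.exp (-c * |(j : ℝ)|) := by
  have h : Summable fun n : ℕ => Real.exp (-c * (n : ℝ)) := by
    simpa only [mul_comm] using Real.summable_exp_nat_mul_iff.2 (neg_lt_zero.2 hc)
  refine Summable.of_nat_of_neg ?_ ?_ <;> simpa using h

/-- A measure on `ℤ` with SOS weights has exponential moments of every order below `β`. -/
theorem integrable_exp_mul_abs_of_sos {μ : Measure ℤ} {β c a : ℝ} (haβ : a < β)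
    (hμ : ∀ j : ℤ, μ {j} = ENNReal.ofReal (c * Real.exp (-β * |(j : ℝ)|))) :
    Integrable (fun j : ℤ => Real.exp (a * |(j : ℝ)|)) μ := by
  refine ⟨Measurable.aestronglyMeasurable (by fun_prop), ?_⟩
  rw [HasFiniteIntegral, lintegral_countable']
  have hterm : ∀ j : ℤ, ‖Real.exp (a * |(j : ℝ)|)‖ₑ * μ {j}
      = ENNReal.ofReal (c * Real.exp (-(β - a) * |(j : ℝ)|)) := fun j => by
    rw [hμ, Real.enorm_of_nonneg (Real.exp_pos _).le, ← ENNReal.ofReal_mul (Real.exp_pos _).le,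
      mul_left_comm, ← Real.exp_add]
    ring_nf
  simp_rw [hterm]
  exact ((summable_exp_neg_mul_abs_int (sub_pos.2 haβ)).mul_left c).tsum_ofReal_lt_top

theorem integral_intCast_eq_zero_of_symm {μ : Measure ℤ} (hμ : ∀ j : ℤ, μ {-j} = μ {j}) :
    ∫ j : ℤ, (j : ℝ) ∂μ = 0 := by
  have hmap : μ.map (fun j : ℤ => -j) = μ := by
    refine Measure.ext_of_singleton fun j => ?_
    rw [Measure.map_apply (by fun_prop) (measurableSet_singleton j), ← hμ j]
    congr 1
    ext k
    simp
  have h : ∫ j : ℤ, (j : ℝ) ∂μ = -∫ j : ℤ, (j : ℝ) ∂μ := by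
    conv_lhs => rw [← hmap]
    rw [integral_map (by fun_prop) (Measurable.aestronglyMeasurable (by fun_prop)),
      ← integral_neg]
    simp
  linarith

theorem sum_take_ofFn {α : Type*} [Fintype α] {k n : ℕ} (hkn : k ≤ n) (G : List α → ℝ) :
    ∑ f : Fin n → α, G ((List.ofFn f).take k)
      = (Fintype.card α : ℝ) ^ (n - k) * ∑ f : Fin k → α, G (List.ofFn f) := by
  obtain ⟨m, rfl⟩ := Nat.exists_eq_add_of_le hkn
  rw [← (Fin.appendEquiv (α := α) k m).sum_comp, Fintype.sum_prod_type, Finset.mul_sum]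
  refine Finset.sum_congr rfl fun f _ => ?_
  have happ : ∀ g : Fin m → α, Fin.appendEquiv k m (f, g) = Fin.append f g := fun _ => rfl
  simp [happ]

theorem sum_sphereW_succ (d n : ℕ) (G : Vertex d → ℝ) :
    ∑ v ∈ sphereW d (n + 1), G v = ∑ a, ∑ f : Fin n → Fin d, G (a, List.ofFn f) := by
  rw [sphereW, Finset.sum_image, Fintype.sum_prod_type]
  · rfl
  · rintro ⟨a, f⟩ - ⟨b, g⟩ - h
    simp only [Prod.mk.injEq] at h
    exact Prod.ext h.1 (List.ofFn_injective h.2)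

theorem length_of_mem_sphereW_succ {d n : ℕ} {v : Vertex d} (hv : v ∈ sphereW d (n + 1)) :
    v.2.length = n := by
  obtain ⟨x, -, rfl⟩ := Finset.mem_image.1 hv
  simp

/-- The vertices of depth between `1` and `n`. -/
def ballW (d n : ℕ) : Finset (Vertex d) := (range n).biUnion fun k => sphereW d (k + 1)

/-- The weight `1 / |W_k|` that the increment at a vertex of depth `k` carries in the
spherical averages. -/
def vertexWeight {d : ℕ} (v : Vertex d) : ℝ := (((d : ℝ) + 1) * (d : ℝ) ^ v.2.length)⁻¹

theorem sum_ballW (d n : ℕ) (G : Vertex d → ℝ) :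
    ∑ v ∈ ballW d n, G v = ∑ k ∈ range n, ∑ v ∈ sphereW d (k + 1), G v := by
  refine Finset.sum_biUnion fun i _ j _ hij => Finset.disjoint_left.2 fun v hi hj => hij ?_
  rw [← length_of_mem_sphereW_succ hi, ← length_of_mem_sphereW_succ hj]

/-- The spherical average is a weighted sum of the increments. -/
theorem sphAvg_succ_eq_sum_ballW {d : ℕ} (hd : 2 ≤ d) {Ω : Type*} (Y : Vertex d → Ω → ℝ) (n : ℕ)
    (ω : Ω) :
    sphAvg d Y (n + 1) ω = ∑ v ∈ ballW d (n + 1), vertexWeight v * Y v ω := by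
  have hd0 : (d : ℝ) ≠ 0 := by positivity
  have hsum : ∑ v ∈ sphereW d (n + 1), heightAt Y v ω
      = ∑ k ∈ range (n + 1), (d : ℝ) ^ (n - k) * ∑ v ∈ sphereW d (k + 1), Y v ω := by
    simp only [sum_sphereW_succ, heightAt, List.length_ofFn, Finset.mul_sum]
    simp_rw [Finset.sum_comm (s := (univ : Finset (Fin n → Fin d)))]
    rw [Finset.sum_comm]
    refine Finset.sum_congr rfl fun k hk => Finset.sum_congr rfl fun a _ => ?_
    rw [sum_take_ofFn (Nat.lt_succ_iff.1 (Finset.mem_range.1 hk)) fun l => Y (a, l) ω,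
      Fintype.card_fin, Finset.mul_sum]
  rw [sphAvg, hsum, sum_ballW, Finset.mul_sum]
  refine Finset.sum_congr rfl fun k hk => ?_
  have hkn : k ≤ n := Nat.lt_succ_iff.1 (Finset.mem_range.1 hk)
  rw [← mul_assoc, Finset.mul_sum]
  refine Finset.sum_congr rfl fun v hv => ?_
  rw [vertexWeight, length_of_mem_sphereW_succ hv]
  congr 1
  have hpow : (d : ℝ) ^ n = (d : ℝ) ^ (n - k) * (d : ℝ) ^ k := by
    rw [← pow_add, Nat.sub_add_cancel hkn]
  have hd1 : (d : ℝ) + 1 ≠ 0 := by positivity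
  push_cast
  rw [hpow]
  field_simp

theorem sum_sq_vertexWeight_le {d : ℕ} (hd : 2 ≤ d) (n : ℕ) :
    ∑ v ∈ ballW d n, vertexWeight v ^ 2 ≤ 2 := by
  have hd2 : (2 : ℝ) ≤ d := by exact_mod_cast hd
  rw [sum_ballW]
  refine le_trans (Finset.sum_le_sum fun k _ => ?_) (sum_geometric_two_le n)
  rw [sum_sphereW_succ]
  have hd0 : (d : ℝ) ≠ 0 := by positivity
  have hd1 : (d : ℝ) + 1 ≠ 0 := by positivity
  have hpow : (0 : ℝ) < 2 ^ k := by positivity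
  simp only [vertexWeight, List.length_ofFn, Finset.sum_const, Finset.card_univ, Fintype.card_fin,
    Fintype.card_fun, nsmul_eq_mul]
  push_cast
  calc ((d : ℝ) + 1) * ((d : ℝ) ^ k * (((d : ℝ) + 1) * (d : ℝ) ^ k)⁻¹ ^ 2)
      = (((d : ℝ) + 1) * (d : ℝ) ^ k)⁻¹ := by field_simp
    _ ≤ (2 ^ k)⁻¹ := by
        refine inv_anti₀ hpow ?_
        calc (2 : ℝ) ^ k ≤ (d : ℝ) ^ k := by gcongr
          _ ≤ ((d : ℝ) + 1) * (d : ℝ) ^ k := le_mul_of_one_le_left (by positivity) (by linarith)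
    _ = (1 / 2) ^ k := by rw [one_div, inv_pow]

theorem abs_mul_vertexWeight_le {d : ℕ} (hd : 2 ≤ d) {t A : ℝ} (ht : |t| ≤ A) (v : Vertex d) :
    |t * vertexWeight v| ≤ A / ((d : ℝ) + 1) := by
  have hd1 : (1 : ℝ) ≤ d := by exact_mod_cast (by omega : 1 ≤ d)
  have hw : 0 ≤ vertexWeight v := by unfold vertexWeight; positivity
  have hw' : vertexWeight v ≤ ((d : ℝ) + 1)⁻¹ :=
    inv_anti₀ (by positivity) (le_mul_of_one_le_right (by positivity) (one_le_pow₀ hd1))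
  rw [abs_mul, abs_of_nonneg hw, div_eq_mul_inv]
  exact mul_le_mul ht hw' hw ((abs_nonneg t).trans ht)

/-- Uniform exponential moments of the spherical averages, given a Gaussian bound on the moment
generating functions of the independent increments. -/
theorem lintegral_exp_sphAvg_le {Ω : Type*} [MeasurableSpace Ω] {P : Measure Ω}
    [IsProbabilityMeasure P] {d : ℕ} (hd : 2 ≤ d) {X : Vertex d → Ω → ℝ}
    (hX : ∀ v, Measurable (X v)) (hindep : iIndepFun X P) {A C t : ℝ} (hC : 0 ≤ C) (ht : |t| ≤ A)
    (hmgf : ∀ v, ∀ u : ℝ, |u| ≤ A / ((d : ℝ) + 1) →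
      Integrable (fun ω => Real.exp (u * X v ω)) P ∧ mgf (X v) P u ≤ Real.exp (C * u ^ 2))
    (n : ℕ) :
    ∫⁻ ω, ENNReal.ofReal (Real.exp (t * sphAvg d X (n + 1) ω)) ∂P
      ≤ ENNReal.ofReal (Real.exp (2 * C * A ^ 2)) := by
  set Z : Vertex d → Ω → ℝ := fun v ω => vertexWeight v * X v ω
  have hZ : ∀ v, Measurable (Z v) := fun v => (hX v).const_mul _
  have hZindep : iIndepFun Z P :=
    hindep.comp (fun v x => vertexWeight v * x) fun v => measurable_const_mul _
  have hbound : ∀ v, Integrable (fun ω => Real.exp (t * Z v ω)) P ∧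
      mgf (Z v) P t ≤ Real.exp (C * t ^ 2 * vertexWeight v ^ 2) := fun v => by
    have h := hmgf v _ (abs_mul_vertexWeight_le hd ht v)
    simp only [Z, mgf, ← mul_assoc] at h ⊢
    rw [mul_assoc C, ← mul_pow]
    exact h
  have hsum : ∀ ω, sphAvg d X (n + 1) ω = (∑ v ∈ ballW d (n + 1), Z v) ω := fun ω => by
    rw [sphAvg_succ_eq_sum_ballW hd, Finset.sum_apply]
  have hint : Integrable (fun ω => Real.exp (t * (∑ v ∈ ballW d (n + 1), Z v) ω)) P :=
    hZindep.integrable_exp_mul_sum hZ fun v _ => (hbound v).1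
  simp_rw [hsum]
  rw [← ofReal_integral_eq_lintegral_ofReal hint (ae_of_all _ fun ω => (Real.exp_pos _).le)]
  refine ENNReal.ofReal_le_ofReal ?_
  have htA : t ^ 2 ≤ A ^ 2 := sq_le_sq' (neg_le_of_abs_le ht) (le_of_abs_le ht)
  calc mgf (∑ v ∈ ballW d (n + 1), Z v) P t
      = ∏ v ∈ ballW d (n + 1), mgf (Z v) P t := hZindep.mgf_sum hZ _
    _ ≤ ∏ v ∈ ballW d (n + 1), Real.exp (C * t ^ 2 * vertexWeight v ^ 2) :=
        Finset.prod_le_prod (fun v _ => mgf_nonneg) fun v _ => (hbound v).2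
    _ = Real.exp (C * t ^ 2 * ∑ v ∈ ballW d (n + 1), vertexWeight v ^ 2) := by
        rw [← Real.exp_sum, Finset.mul_sum]
    _ ≤ Real.exp (2 * C * A ^ 2) := by
        refine Real.exp_le_exp.2 ?_
        calc C * t ^ 2 * ∑ v ∈ ballW d (n + 1), vertexWeight v ^ 2
            ≤ C * A ^ 2 * 2 := by
              gcongr
              exact sum_sq_vertexWeight_le hd _
          _ = 2 * C * A ^ 2 := by ring

/-- Exponential moments pass to almost sure limits. -/
theorem lintegral_exp_le_of_tendsto {Ω : Type*} [MeasurableSpace Ω] {P : Measure Ω}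
    {F : ℕ → Ω → ℝ} {H : Ω → ℝ} (hF : ∀ n, Measurable (F n)) {t K : ℝ}
    (hlim : ∀ᵐ ω ∂P, Tendsto (fun n => F n ω) atTop (𝓝 (H ω)))
    (hK : ∀ n, ∫⁻ ω, ENNReal.ofReal (Real.exp (t * F n ω)) ∂P ≤ ENNReal.ofReal K) :
    ∫⁻ ω, ENNReal.ofReal (Real.exp (t * H ω)) ∂P ≤ ENNReal.ofReal K := by
  calc ∫⁻ ω, ENNReal.ofReal (Real.exp (t * H ω)) ∂P
      = ∫⁻ ω, liminf (fun n => ENNReal.ofReal (Real.exp (t * F n ω))) atTop ∂P := by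
        refine lintegral_congr_ae ?_
        filter_upwards [hlim] with ω hω
        exact (ENNReal.tendsto_ofReal
          ((Real.continuous_exp.tendsto _).comp (hω.const_mul t))).liminf_eq.symm
    _ ≤ liminf (fun n => ∫⁻ ω, ENNReal.ofReal (Real.exp (t * F n ω)) ∂P) atTop :=
        lintegral_liminf_le fun n => by have := hF n; fun_prop
    _ ≤ liminf (fun _ : ℕ => ENNReal.ofReal K) atTop :=
        liminf_le_liminf (Eventually.of_forall hK)
    _ = ENNReal.ofReal K := liminf_const _

/-- The exponential Markov inequality in terms of the lower integral. -/
theorem measure_le_mul_le_of_lintegral_exp_le {Ω : Type*} [MeasurableSpace Ω] {P : Measure Ω}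
    {H : Ω → ℝ} (hH : Measurable H) {t K : ℝ}
    (hK : ∫⁻ ω, ENNReal.ofReal (Real.exp (t * H ω)) ∂P ≤ ENNReal.ofReal K) (x : ℝ) :
    P {ω | x ≤ t * H ω} ≤ ENNReal.ofReal (K * Real.exp (-x)) := by
  have hset : {ω | x ≤ t * H ω}
      = {ω | ENNReal.ofReal (Real.exp x) ≤ ENNReal.ofReal (Real.exp (t * H ω))} := by
    ext ω
    simp [ENNReal.ofReal_le_ofReal_iff (Real.exp_pos _).le]
  have hmarkov := (mul_meas_ge_le_lintegral (μ := P)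
    (f := fun ω => ENNReal.ofReal (Real.exp (t * H ω))) (by fun_prop)
    (ENNReal.ofReal (Real.exp x))).trans hK
  rw [← hset] at hmarkov
  rw [Real.exp_neg, ← div_eq_mul_inv, ENNReal.ofReal_div_of_pos (Real.exp_pos x),
    ENNReal.le_div_iff_mul_le (Or.inl (by simp [Real.exp_pos])) (Or.inl (by simp)), mul_comm]
  exact hmarkov

/-- For the free height field with SOS increment law
`p(j) = e^{-β|j|}/Z`, the a.s. limit `H` of the spherical averages satisfies
`P(|H| ≥ s) ≤ B(A) e^{-As}` for every `0 < A < (d+1)β`. -/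
theorem sos_limit_exponential_tail
    {Ω : Type} [MeasurableSpace Ω] (P : Measure Ω) [IsProbabilityMeasure P]
    (d : ℕ) (hd : 2 ≤ d)
    (β : ℝ) (hβ : 0 < β)
    (p : ℤ → ℝ)
    (hp : ∀ j : ℤ, p j = Real.exp (-β * |(j : ℝ)|) / ∑' k : ℤ, Real.exp (-β * |(k : ℝ)|))
    (Y : Vertex d → Ω → ℤ) (hmeas : ∀ v, Measurable (Y v))
    (hindep : iIndepFun Y P)
    (hlaw : ∀ v (j : ℤ), P {ω | Y v ω = j} = ENNReal.ofReal (p j))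
    (H : Ω → ℝ) (hHmeas : Measurable H)
    (hH : ∀ᵐ ω ∂P, Tendsto (fun r => sphAvg d (fun v ω => (Y v ω : ℝ)) r ω) atTop (𝓝 (H ω))) :
    ∀ A : ℝ, 0 < A → A < ((d : ℝ) + 1) * β →
      ∃ B : ℝ, 0 ≤ B ∧ ∀ s : ℝ, 0 ≤ s →
        P {ω | s ≤ |H ω|} ≤ ENNReal.ofReal (B * Real.exp (-A * s)) := by
  intro A hA hAβ
  have hd1 : (0 : ℝ) < (d : ℝ) + 1 := by positivity
  set Z : ℝ := ∑' k : ℤ, Real.exp (-β * |(k : ℝ)|)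
  set μ : Measure ℤ := P.map (Y (0, []))
  have hμ : ∀ v, ∀ j : ℤ,
      P.map (Y v) {j} = ENNReal.ofReal (Z⁻¹ * Real.exp (-β * |(j : ℝ)|)) := fun v j => by
    rw [Measure.map_apply (hmeas v) (measurableSet_singleton j), inv_mul_eq_div, ← hp j]
    exact hlaw v j
  have hmap : ∀ v, P.map (Y v) = μ := fun v =>
    Measure.ext_of_singleton fun j => (hμ v j).trans (hμ _ j).symm
  have : IsProbabilityMeasure μ := Measure.isProbabilityMeasure_map (hmeas _).aemeasurable
  obtain ⟨a, hAa, haβ⟩ := exists_between ((div_lt_iff₀' hd1).2 hAβ)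
  obtain ⟨C, hC, hmgf⟩ := exists_mgf_le_exp_mul_sq (μ := μ) (X := fun j : ℤ => (j : ℝ))
    (by fun_prop) (by positivity) hAa (integrable_exp_mul_abs_of_sos haβ (hμ _))
    (integral_intCast_eq_zero_of_symm fun j => by simp [μ, hμ])
  set X : Vertex d → Ω → ℝ := fun v ω => (Y v ω : ℝ)
  have hX : ∀ v, Measurable (X v) := fun v => by have := hmeas v; fun_prop
  have hXindep : iIndepFun X P :=
    hindep.comp (fun _ j => (j : ℝ)) fun _ => by fun_prop
  have hXmgf : ∀ v, ∀ u : ℝ, |u| ≤ A / ((d : ℝ) + 1) →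
      Integrable (fun ω => Real.exp (u * X v ω)) P ∧ mgf (X v) P u ≤ Real.exp (C * u ^ 2) := by
    intro v u hu
    obtain ⟨hint, hle⟩ := hmgf u hu
    rw [← hmap v] at hint hle
    refine ⟨hint.comp_measurable (hmeas v), ?_⟩
    rwa [mgf_map (hmeas v).aemeasurable hint.aestronglyMeasurable] at hle
  set K : ℝ := Real.exp (2 * C * A ^ 2)
  have hmeasAvg : ∀ n, Measurable (sphAvg d X (n + 1)) := fun n =>
    (Finset.measurable_fun_sum _ fun v _ =>
      Finset.measurable_fun_sum _ fun k _ => hX _).const_mul _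
  have htail : ∀ t : ℝ, |t| ≤ A → ∀ x : ℝ,
      P {ω | x ≤ t * H ω} ≤ ENNReal.ofReal (K * Real.exp (-x)) := fun t ht =>
    measure_le_mul_le_of_lintegral_exp_le hHmeas
      (lintegral_exp_le_of_tendsto hmeasAvg
        (hH.mono fun ω hω => (tendsto_add_atTop_iff_nat 1).2 hω)
        (lintegral_exp_sphAvg_le hd hX hXindep hC ht hXmgf))
  refine ⟨2 * K, by positivity, fun s _ => ?_⟩
  have hsub : {ω | s ≤ |H ω|} ⊆ {ω | A * s ≤ A * H ω} ∪ {ω | A * s ≤ -A * H ω} := by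
    intro ω hω
    have hs : s ≤ |H ω| := hω
    rcases le_abs.1 hs with h | h
    · exact Or.inl (mul_le_mul_of_nonneg_left h hA.le)
    · refine Or.inr ((mul_le_mul_of_nonneg_left h hA.le).trans_eq ?_)
      ring
  calc P {ω | s ≤ |H ω|}
      ≤ P {ω | A * s ≤ A * H ω} + P {ω | A * s ≤ -A * H ω} :=
        (measure_mono hsub).trans (measure_union_le _ _)
    _ ≤ ENNReal.ofReal (K * Real.exp (-(A * s))) + ENNReal.ofReal (K * Real.exp (-(A * s))) :=
        add_le_add (htail A (abs_of_pos hA).le _)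
          (htail (-A) ((abs_neg A).trans (abs_of_pos hA)).le _)
    _ = ENNReal.ofReal (2 * K * Real.exp (-A * s)) := by
        rw [← ENNReal.ofReal_add (by positivity) (by positivity), neg_mul]
        ring_nf
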